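/- If m ≡ 0 or 5 (mod 6) and m, n ≥ 3, then the 2-distance paired domination number satisfies γ_p^2(f_{n×m}) = 2·⌈(nm - 3n)/6⌉. -/

import Mathlib

abbrev FlowerVert (n m : ℕ) := ZMod n ⊕ ZMod n × Fin (m - 2)

def flowerRel (n m : ℕ) : FlowerVert n m → FlowerVert n m → Prop
  | Sum.inl i, Sum.inl i' => i' = i + 1
  | Sum.inl i, Sum.inr (i', j) => (i' = i ∧ j.val = 0) ∨ (i = i' + 1 ∧ j.val = m - 3)
  | Sum.inr (i, j), Sum.inr (i', j') => i' = i ∧ j'.val = j.val + 1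
  | _, _ => False

/-- The flower graph `f_{n×m}`. -/
def flowerGraph (n m : ℕ) : SimpleGraph (FlowerVert n m) :=
  SimpleGraph.fromRel (flowerRel n m)

/-- `D` is a paired dominating set of `G`. -/
def IsPairedDominating {V : Type*} (G : SimpleGraph V) (D : Set V) : Prop :=
  (∀ v ∉ D, ∃ u ∈ D, G.Adj u v) ∧
  ∃ M : G.Subgraph, M.verts = D ∧ M.IsMatching

/-- `D` is a `k`-distance paired dominating set of `G`. -/
def IsKDistPairedDominating {V : Type*} (G : SimpleGraph V) (k : ℕ) (D : Set V) : Prop :=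
  (∀ v ∉ D, ∃ u ∈ D, G.edist u v ≤ k) ∧
  ∃ M : G.Subgraph, M.verts = D ∧ M.IsMatching

/-- The paired domination number `γ_p(G)`. -/
noncomputable def pairedDomNum {V : Type*} (G : SimpleGraph V) : ℕ :=
  sInf {c | ∃ D : Set V, IsPairedDominating G D ∧ D.ncard = c}

/-- The `k`-distance paired domination number `γ_p^k(G)`. -/
noncomputable def kDistPairedDomNum {V : Type*} (G : SimpleGraph V) (k : ℕ) : ℕ :=
  sInf {c | ∃ D : Set V, IsKDistPairedDominating G k D ∧ D.ncard = c}

/-- The `k`-distance domination number `γ^k(G)`. -/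
noncomputable def kDistDomNum {V : Type*} (G : SimpleGraph V) (k : ℕ) : ℕ :=
  sInf {c | ∃ D : Set V, (∀ v ∉ D, ∃ u ∈ D, G.edist u v ≤ k) ∧ D.ncard = c}

/-!
A paired dominating set has `2 |M|` vertices, where `M` is a perfect matching of it. View the petal
of `u_i` as a path `u_i, v_{i,1}, …, v_{i,m-2}, u_{i+1}`. Its `m - 4` vertices at distance at least
two from both ends are dominated only from within the petal: an edge of `M` avoiding the ends
dominates at most six of them, and the edges at the ends account together for at most four. Since
`m - 4` is `2` or `1` modulo `6`, rounding improves this count in each petal, and summing over all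
petals gives `n (m - 3) ≤ 6 |M|`. Conversely, if `m ≡ 0` take every second rim edge, if `m ≡ 5`
every third one, and in each petal fill the gap that is left with edges six positions apart; when
the last chosen rim edge would meet the first one, an edge from its hub into the petal replaces it.
-/

lemma natCast_ceilDiv (K : Type*) [Field K] [LinearOrder K] [IsStrictOrderedRing K] [FloorRing K]
    {a b : ℕ} (hb : 0 < b) : ((a ⌈/⌉ b : ℕ) : ℤ) = ⌈(a : K) / b⌉ := by
  rw [← Int.natCast_ceil_eq_ceil (by positivity), Nat.cast_inj]
  refine eq_of_forall_ge_iff fun c => ?_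
  rw [ceilDiv_le_iff_le_mul hb, Nat.ceil_le, div_le_iff₀ (by exact_mod_cast hb), mul_comm]
  norm_cast

lemma natCast_zmod_inj {n x y : ℕ} (hx : x < n) (hy : y < n) : (x : ZMod n) = y ↔ x = y :=
  (CharP.natCast_injOn_Iio (ZMod n) n).eq_iff hx hy

lemma sum_comp_add_right {G A : Type*} [AddGroup G] [Fintype G] [AddCommMonoid A] (f : G → A)
    (a : G) : ∑ x, f (x + a) = ∑ x, f x :=
  Equiv.sum_comp (Equiv.addRight a) f

lemma sum_comp_sub_right {G A : Type*} [AddGroup G] [Fintype G] [AddCommMonoid A] (f : G → A)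
    (a : G) : ∑ x, f (x - a) = ∑ x, f x :=
  Equiv.sum_comp (Equiv.subRight a) f

open scoped Classical in
lemma sum_ite_adj_of_isMatching {V : Type*} {G : SimpleGraph V} {M : G.Subgraph}
    (hM : M.IsMatching) {v : V} {s : Finset V} (hs : ∀ w, M.Adj v w → w ∈ s) :
    ∑ w ∈ s, (if M.Adj v w then 1 else 0) = if v ∈ M.verts then 1 else 0 := by
  split_ifs with hv
  · obtain ⟨w, hw, hunique⟩ := hM hv
    have hiff : ∀ x, M.Adj v x ↔ x = w := fun x => ⟨hunique x, fun h => h ▸ hw⟩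
    simp [hiff, hs w hw]
  · exact Finset.sum_eq_zero fun w _ => if_neg fun h => hv h.fst_mem

lemma exists_isMatching_verts_eq_range {V E : Type*} {G : SimpleGraph V} {a b : E → V}
    (hadj : ∀ e, G.Adj (a e) (b e)) (hinj : Function.Injective (Sum.elim a b)) :
    ∃ M : G.Subgraph, M.verts = Set.range (Sum.elim a b) ∧ M.IsMatching := by
  obtain ⟨ha, hb, hab⟩ := Sum.elim_injective.1 hinj
  rw [Set.Sum.elim_range]
  refine SimpleGraph.Subgraph.IsMatching.exists_of_disjoint_sets_of_equiv
    (Set.disjoint_range_iff.2 hab)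
    ((Equiv.ofInjective a ha).symm.trans (Equiv.ofInjective b hb)) ?_
  rintro ⟨_, e, rfl⟩
  simpa using hadj e

lemma exists_isMatching_verts_eq_union {V : Type*} {G : SimpleGraph V} {s t : Set V}
    (hst : Disjoint s t) (hs : ∃ M : G.Subgraph, M.verts = s ∧ M.IsMatching)
    (ht : ∃ M : G.Subgraph, M.verts = t ∧ M.IsMatching) :
    ∃ M : G.Subgraph, M.verts = s ∪ t ∧ M.IsMatching := by
  obtain ⟨M, rfl, hM⟩ := hs
  obtain ⟨M', rfl, hM'⟩ := ht
  exact ⟨M ⊔ M', SimpleGraph.Subgraph.verts_sup _ _,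
    hM.sup hM' (by rwa [hM.support_eq_verts, hM'.support_eq_verts])⟩

lemma kDistPairedDomNum_le_ncard {V : Type*} {G : SimpleGraph V} {k : ℕ} {D : Set V}
    (hD : IsKDistPairedDominating G k D) : kDistPairedDomNum G k ≤ D.ncard :=
  Nat.sInf_le ⟨D, hD, rfl⟩

lemma exists_ncard_eq_kDistPairedDomNum {V : Type*} {G : SimpleGraph V} {k : ℕ} {D : Set V}
    (hD : IsKDistPairedDominating G k D) :
    ∃ D', IsKDistPairedDominating G k D' ∧ D'.ncard = kDistPairedDomNum G k :=
  Nat.sInf_mem (s := {c | ∃ D, IsKDistPairedDominating G k D ∧ D.ncard = c}) ⟨_, D, hD, rfl⟩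

/-- The petal `u_i, v_{i,1}, …, v_{i,m-2}, u_{i+1}` of the flower graph as a path on the positions
`0, …, m - 1`; positions beyond `m - 1` also give `u_{i+1}`. -/
def petalVert {n m : ℕ} (i : ZMod n) : ℕ → FlowerVert n m
  | 0 => Sum.inl i
  | k + 1 => if h : k < m - 2 then Sum.inr (i, ⟨k, h⟩) else Sum.inl (i + 1)

section Petal

variable {n m : ℕ}

@[simp]
lemma petalVert_zero (i : ZMod n) : petalVert (m := m) i 0 = Sum.inl i := rfl

lemma petalVert_succ_of_lt (i : ZMod n) {k : ℕ} (hk : k < m - 2) :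
    petalVert i (k + 1) = Sum.inr (i, ⟨k, hk⟩) := dif_pos hk

lemma petalVert_last (hm : 3 ≤ m) (i : ZMod n) :
    petalVert (m := m) i (m - 1) = Sum.inl (i + 1) := by
  obtain ⟨k, rfl⟩ : ∃ k, m = k + 2 := ⟨m - 2, by omega⟩
  exact dif_neg (lt_irrefl k)

lemma petalVert_inj {i i' : ZMod n} {k k' : ℕ} (hk : k < m - 1) (hk' : k' < m - 1) :
    (petalVert i k : FlowerVert n m) = petalVert i' k' ↔ i = i' ∧ k = k' := by
  rcases k with _ | k <;> rcases k' with _ | k'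
  · simp
  · simp [petalVert_succ_of_lt i' (show k' < m - 2 by omega)]
  · simp [petalVert_succ_of_lt i (show k < m - 2 by omega)]
  · simp [petalVert_succ_of_lt i (show k < m - 2 by omega),
      petalVert_succ_of_lt i' (show k' < m - 2 by omega)]

lemma petalVert_ne {i : ZMod n} (hn : 2 ≤ n) (hm : 3 ≤ m) {k l : ℕ} (hkl : k < l) (hl : l < m) :
    (petalVert i k : FlowerVert n m) ≠ petalVert i l := by
  have : Fact (1 < n) := ⟨hn⟩
  rcases Nat.lt_or_ge l (m - 1) with hl' | hl'
  · rw [Ne, petalVert_inj (by omega) hl']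
    omega
  · obtain rfl : l = m - 1 := by omega
    rw [petalVert_last hm, ← petalVert_zero, Ne, petalVert_inj hkl (by omega)]
    simp

lemma adj_rim (hn : 2 ≤ n) (i : ZMod n) :
    (flowerGraph n m).Adj (Sum.inl i) (Sum.inl (i + 1)) := by
  have : Fact (1 < n) := ⟨hn⟩
  simp [flowerGraph, flowerRel]

lemma adj_petalVert_succ (hm : 3 ≤ m) (i : ZMod n) {k : ℕ} (hk : k < m - 1) :
    (flowerGraph n m).Adj (petalVert i k) (petalVert i (k + 1)) := by
  rcases k with _ | k
  · rw [petalVert_succ_of_lt i (by omega)]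
    simp [flowerGraph, flowerRel]
  · rw [petalVert_succ_of_lt i (by omega)]
    rcases Nat.lt_or_ge (k + 1) (m - 2) with hk' | hk'
    · rw [petalVert_succ_of_lt i hk']
      simp [flowerGraph, flowerRel]
    · obtain rfl : k = m - 3 := by omega
      rw [show m - 3 + 1 + 1 = m - 1 by omega, petalVert_last hm]
      simp [flowerGraph, flowerRel]

lemma eq_or_eq_of_adj_petalVert_succ {i : ZMod n} {k : ℕ} (hk : k < m - 2)
    {w : FlowerVert n m} (h : (flowerGraph n m).Adj (petalVert i (k + 1)) w) :
    w = petalVert i k ∨ w = petalVert i (k + 2) := by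
  have hm : 3 ≤ m := by omega
  rw [petalVert_succ_of_lt i hk] at h
  rcases w with i' | ⟨i', j, hj⟩
  · simp only [flowerGraph, SimpleGraph.fromRel_adj, flowerRel, false_or] at h
    rcases h.2 with ⟨rfl, rfl⟩ | ⟨rfl, rfl⟩
    · exact Or.inl rfl
    · rw [show m - 3 + 2 = m - 1 by omega, petalVert_last hm]
      exact Or.inr rfl
  · simp only [flowerGraph, SimpleGraph.fromRel_adj, flowerRel] at h
    rcases h.2 with ⟨rfl, rfl⟩ | ⟨rfl, rfl⟩
    · exact Or.inr (petalVert_succ_of_lt _ hj).symm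
    · exact Or.inl (petalVert_succ_of_lt _ hj).symm

lemma eq_of_adj_hub {i : ZMod n} {w : FlowerVert n m}
    (h : (flowerGraph n m).Adj (Sum.inl i) w) :
    w = Sum.inl (i + 1) ∨ w = Sum.inl (i - 1) ∨ w = petalVert i 1 ∨
      w = petalVert (i - 1) (m - 2) := by
  rcases w with i' | ⟨i', j, hj⟩
  · simp only [flowerGraph, SimpleGraph.fromRel_adj, flowerRel] at h
    rcases h.2 with rfl | rfl <;> simp
  · simp only [flowerGraph, SimpleGraph.fromRel_adj, flowerRel, or_false] at h
    rcases h.2 with ⟨rfl, rfl⟩ | ⟨rfl, rfl⟩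
    · exact Or.inr (Or.inr (Or.inl (petalVert_succ_of_lt _ hj).symm))
    · have hlast := petalVert_succ_of_lt i' hj
      rw [show m - 3 + 1 = m - 2 by omega] at hlast
      simp [hlast]

lemma exists_eq_petalVert_of_walk {u v : FlowerVert n m} (p : (flowerGraph n m).Walk u v)
    {i : ZMod n} {k : ℕ} (hu : u = petalVert i k) (hk : p.length ≤ k)
    (hk' : k + p.length < m) :
    ∃ l ≤ k + p.length, k ≤ l + p.length ∧ v = petalVert i l := by
  induction p generalizing k with
  | nil => exact ⟨k, by simp, by simp, hu⟩
  | cons h p ih =>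
    subst hu
    rw [SimpleGraph.Walk.length_cons] at hk hk' ⊢
    obtain ⟨k, rfl⟩ : ∃ k', k = k' + 1 := ⟨k - 1, by omega⟩
    rcases eq_or_eq_of_adj_petalVert_succ (by omega) h with hw | hw
    · obtain ⟨l, hl, hl', rfl⟩ := ih hw (by omega) (by omega)
      exact ⟨l, by omega, by omega, rfl⟩
    · obtain ⟨l, hl, hl', rfl⟩ := ih hw (by omega) (by omega)
      exact ⟨l, by omega, by omega, rfl⟩

lemma exists_eq_petalVert_of_edist_le {i : ZMod n} {k r : ℕ} (hk : r ≤ k) (hk' : k + r < m)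
    {v : FlowerVert n m} (h : (flowerGraph n m).edist (petalVert i k) v ≤ r) :
    ∃ l ≤ k + r, k ≤ l + r ∧ v = petalVert i l := by
  obtain ⟨p, hp⟩ := SimpleGraph.exists_walk_of_edist_ne_top
    (ne_top_of_le_ne_top (ENat.natCast_ne_top r) h)
  have hpr : p.length ≤ r := by rw [← hp] at h; exact_mod_cast h
  obtain ⟨l, hl, hl', hv⟩ := exists_eq_petalVert_of_walk p rfl (by omega) (by omega)
  exact ⟨l, by omega, by omega, hv⟩

lemma edist_petalVert_add_le (hm : 3 ≤ m) (i : ZMod n) {k r : ℕ} (h : k + r < m) :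
    (flowerGraph n m).edist (petalVert i k) (petalVert i (k + r)) ≤ r := by
  induction r with
  | zero => simp
  | succ r ih =>
    rw [← add_assoc, Nat.cast_succ]
    exact SimpleGraph.edist_triangle.trans (add_le_add (ih (by omega))
      (SimpleGraph.edist_eq_one_iff_adj.2 (adj_petalVert_succ hm i (by omega))).le)

lemma edist_petalVert_le (hm : 3 ≤ m) (i : ZMod n) {k l r : ℕ} (hk : k < m) (hl : l < m)
    (hkl : k ≤ l + r) (hlk : l ≤ k + r) :
    (flowerGraph n m).edist (petalVert i k) (petalVert i l) ≤ r := by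
  wlog h : k ≤ l generalizing k l
  · rw [SimpleGraph.edist_comm]
    exact this hl hk hlk hkl (by omega)
  · obtain ⟨d, rfl⟩ := Nat.exists_eq_add_of_le h
    exact (edist_petalVert_add_le hm i hl).trans (by exact_mod_cast (show d ≤ r by omega))

lemma edist_hub_petalVert_le_two (hn : 2 ≤ n) (hm : 3 ≤ m) (i : ZMod n) {k : ℕ} (hk : k < m)
    (h : k ≤ 2 ∨ m - 2 ≤ k) :
    (flowerGraph n m).edist (Sum.inl i) (petalVert i k) ≤ 2 := by
  rcases h with h | h
  · exact edist_petalVert_le hm i (k := 0) (r := 2) (by omega) hk (by omega) (by omega)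
  · have hrim := SimpleGraph.edist_eq_one_iff_adj.2 (adj_rim (m := m) hn i)
    rw [← petalVert_last hm] at hrim
    calc _ ≤ _ + _ := SimpleGraph.edist_triangle (v := petalVert i (m - 1))
      _ ≤ 1 + 1 := add_le_add hrim.le
        (edist_petalVert_le hm i (r := 1) (by omega) hk (by omega) (by omega))
      _ = 2 := one_add_one_eq_two

lemma edist_hub_succ_petalVert_le_two (hn : 2 ≤ n) (hm : 3 ≤ m) (i : ZMod n) {k : ℕ} (hk : k < m)
    (h : k ≤ 1 ∨ m - 3 ≤ k) :
    (flowerGraph n m).edist (Sum.inl (i + 1)) (petalVert i k) ≤ 2 := by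
  rcases h with h | h
  · calc _ ≤ _ + _ := SimpleGraph.edist_triangle (v := Sum.inl i)
      _ ≤ 1 + 1 := add_le_add (SimpleGraph.edist_eq_one_iff_adj.2 (adj_rim hn i).symm).le
        (edist_petalVert_le hm i (k := 0) (r := 1) (by omega) hk (by omega) (by omega))
      _ = 2 := one_add_one_eq_two
  · rw [← petalVert_last hm]
    exact edist_petalVert_le hm i (r := 2) (by omega) hk (by omega) (by omega)

lemma exists_eq_petalVert (hm : 3 ≤ m) (v : FlowerVert n m) :
    ∃ i, ∃ k < m - 1, v = petalVert i k := by
  rcases v with i | ⟨i, k, hk⟩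
  · exact ⟨i, 0, by omega, rfl⟩
  · exact ⟨i, k + 1, by omega, (petalVert_succ_of_lt i hk).symm⟩

end Petal

section LowerBound

variable {n m : ℕ} (M : (flowerGraph n m).Subgraph)

open scoped Classical in
/-- Indicator of membership of a vertex in the set matched by `M`. -/
noncomputable def matchedInd (v : FlowerVert n m) : ℕ := if v ∈ M.verts then 1 else 0

open scoped Classical in
/-- Indicator of the rim edge `u_i u_{i+1}` in the matching `M`. -/
noncomputable def rimInd (i : ZMod n) : ℕ := if M.Adj (Sum.inl i) (Sum.inl (i + 1)) then 1 else 0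

open scoped Classical in
/-- Indicator in the matching `M` of the edge joining the positions `k` and `k + 1` of the petal
`i`; it is meant for `k < m - 1`. -/
noncomputable def petalInd (i : ZMod n) (k : ℕ) : ℕ :=
  if M.Adj (petalVert i k) (petalVert i (k + 1)) then 1 else 0

variable {M}

lemma matchedInd_le_one (v : FlowerVert n m) : matchedInd M v ≤ 1 := by
  unfold matchedInd; split_ifs <;> simp

lemma petalInd_le_one (i : ZMod n) (k : ℕ) : petalInd M i k ≤ 1 := by
  unfold petalInd; split_ifs <;> simp

lemma petalInd_le_matchedInd (i : ZMod n) (k : ℕ) :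
    petalInd M i k ≤ matchedInd M (petalVert i k) ∧
      petalInd M i k ≤ matchedInd M (petalVert i (k + 1)) := by
  unfold petalInd
  split_ifs with h
  · simp [matchedInd, h.fst_mem, h.snd_mem]
  · simp

lemma matchedInd_petalVert_succ (hn : 2 ≤ n) (hM : M.IsMatching) (i : ZMod n) {k : ℕ}
    (hk : k < m - 2) :
    matchedInd M (petalVert i (k + 1)) = petalInd M i k + petalInd M i (k + 1) := by
  classical
  have hs : ∀ w, M.Adj (petalVert i (k + 1)) w →
      w ∈ ({petalVert i k, petalVert i (k + 2)} : Finset (FlowerVert n m)) := fun w hw => by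
    simpa using eq_or_eq_of_adj_petalVert_succ hk hw.adj_sub
  rw [matchedInd, ← sum_ite_adj_of_isMatching hM hs,
    Finset.sum_pair (petalVert_ne hn (by omega) (by omega) (by omega)), petalInd, petalInd]
  simp only [M.adj_comm (petalVert i (k + 1)) (petalVert i k)]

lemma matchedInd_hub (hn : 3 ≤ n) (hm : 3 ≤ m) (hM : M.IsMatching) (i : ZMod n) :
    matchedInd M (Sum.inl i) =
      rimInd M i + rimInd M (i - 1) + petalInd M i 0 + petalInd M (i - 1) (m - 2) := by
  classical
  have : Fact (2 < n) := ⟨hn⟩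
  have : Fact (1 < n) := ⟨by omega⟩
  have hfirst := petalVert_succ_of_lt i (show 0 < m - 2 by omega)
  have hlast := petalVert_succ_of_lt (i - 1) (show m - 3 < m - 2 by omega)
  have hnext := petalVert_last hm (i - 1)
  rw [show m - 3 + 1 = m - 2 by omega] at hlast
  rw [show m - 1 = m - 2 + 1 by omega, sub_add_cancel] at hnext
  have hsucc : i + 1 ≠ i - 1 := by
    rw [sub_eq_add_neg, Ne, add_right_inj, eq_comm]
    exact ZMod.neg_one_ne_one
  have hpred : i ≠ i - 1 := by simp [eq_sub_iff_add_eq]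
  have hs : ∀ w, M.Adj (Sum.inl i) w → w ∈ ({Sum.inl (i + 1), Sum.inl (i - 1), petalVert i 1,
      petalVert (i - 1) (m - 2)} : Finset (FlowerVert n m)) := fun w hw => by
    simpa using eq_of_adj_hub hw.adj_sub
  rw [matchedInd, ← sum_ite_adj_of_isMatching hM hs, Finset.sum_insert (by simp [*]),
    Finset.sum_insert (by simp [*]), Finset.sum_pair (by simp [*])]
  simp only [rimInd, petalInd, sub_add_cancel, hnext, petalVert_zero, zero_add,
    M.adj_comm (Sum.inl i) (Sum.inl (i - 1)), M.adj_comm (Sum.inl i) (petalVert (i - 1) (m - 2))]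
  ring

lemma ncard_verts_eq_sum_matchedInd [NeZero n] :
    M.verts.ncard =
      ∑ i : ZMod n, (matchedInd M (Sum.inl i) +
        ∑ k ∈ Finset.range (m - 2), matchedInd M (petalVert i (k + 1))) := by
  classical
  have hsum : M.verts.ncard = ∑ v, matchedInd M v := by
    simp [matchedInd, Set.ncard_eq_toFinset_card', Finset.sum_boole,
      ← Set.filter_mem_univ_eq_toFinset]
  rw [hsum, Fintype.sum_sum_type, Fintype.sum_prod_type, Finset.sum_add_distrib]
  simp only [Finset.sum_range, petalVert_succ_of_lt _ (Fin.isLt _)]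

variable (M) in
/-- Number of edges of the matching `M` inside the petal `i` that avoid both hubs
`u_i` and `u_{i+1}`. -/
noncomputable def innerCount (i : ZMod n) : ℕ := ∑ k ∈ Finset.Ico 1 (m - 2), petalInd M i k

variable (M) in
/-- Number of edges of the matching `M` attributed to `i`: the rim edge `u_i u_{i+1}` and the
edges of the petal `i`. -/
noncomputable def edgeCount (i : ZMod n) : ℕ :=
  rimInd M i + innerCount M i + petalInd M i 0 + petalInd M i (m - 2)

lemma sum_matchedInd_petal (hn : 2 ≤ n) (hm : 3 ≤ m) (hM : M.IsMatching) (i : ZMod n) :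
    ∑ k ∈ Finset.range (m - 2), matchedInd M (petalVert i (k + 1)) =
      2 * innerCount M i + petalInd M i 0 + petalInd M i (m - 2) := by
  have hends : ∑ k ∈ Finset.range (m - 2), petalInd M i k = petalInd M i 0 + innerCount M i := by
    rw [Finset.range_eq_Ico, Finset.sum_eq_sum_Ico_succ_bot (by omega), innerCount]
  have hshift := Finset.sum_range_succ' (petalInd M i) (m - 2)
  rw [Finset.sum_range_succ] at hshift
  rw [Finset.sum_congr rfl fun k hk =>
    matchedInd_petalVert_succ hn hM i (Finset.mem_range.1 hk), Finset.sum_add_distrib]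
  omega

lemma ncard_verts_eq_two_mul_sum_edgeCount [NeZero n] (hn : 3 ≤ n) (hm : 3 ≤ m)
    (hM : M.IsMatching) : M.verts.ncard = 2 * ∑ i, edgeCount M i := by
  rw [ncard_verts_eq_sum_matchedInd]
  simp only [matchedInd_hub hn hm hM, sum_matchedInd_petal (by omega) hm hM, edgeCount,
    Finset.sum_add_distrib, sum_comp_sub_right, sum_comp_sub_right (petalInd M · (m - 2)),
    ← Finset.mul_sum]
  ring

lemma exists_near_edge_or_hub (hn : 2 ≤ n) (hM : M.IsMatching)
    (hdom : ∀ v ∉ M.verts, ∃ u ∈ M.verts, (flowerGraph n m).edist u v ≤ 2) (i : ZMod n) {k : ℕ}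
    (hk : 2 ≤ k) (hk' : k + 2 < m) :
    (∃ q ≤ m - 2, petalInd M i q = 1 ∧ q ≤ k + 2 ∧ k ≤ q + 3) ∨
      (k = 2 ∧ matchedInd M (Sum.inl i) = 1) ∨
      (k + 3 = m ∧ matchedInd M (Sum.inl (i + 1)) = 1) := by
  obtain ⟨l, hl, hl', hlM⟩ : ∃ l ≤ k + 2, k ≤ l + 2 ∧ petalVert i l ∈ M.verts := by
    by_cases hkM : petalVert i k ∈ M.verts
    · exact ⟨k, by omega, by omega, hkM⟩
    obtain ⟨u, hu, hdist⟩ := hdom _ hkM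
    rw [SimpleGraph.edist_comm] at hdist
    obtain ⟨l, hl, hl', rfl⟩ := exists_eq_petalVert_of_edist_le (r := 2) hk hk' hdist
    exact ⟨l, hl, hl', hu⟩
  have hind : matchedInd M (petalVert i l) = 1 := if_pos hlM
  obtain rfl | rfl | ⟨l, rfl, hlm⟩ : l = 0 ∨ l = m - 1 ∨ ∃ l', l = l' + 1 ∧ l' < m - 2 := by
    by_cases h : l = 0 ∨ l = m - 1
    · tauto
    · exact Or.inr (Or.inr ⟨l - 1, by omega, by omega⟩)
  · exact Or.inr (Or.inl ⟨by omega, hind⟩)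
  · rw [petalVert_last (by omega)] at hind
    exact Or.inr (Or.inr ⟨by omega, hind⟩)
  · rw [matchedInd_petalVert_succ hn hM i hlm] at hind
    left
    rcases Nat.eq_zero_or_pos (petalInd M i l) with h | h
    · exact ⟨l + 1, by omega, by omega, by omega, by omega⟩
    · exact ⟨l, by omega, by omega, by omega, by omega⟩

variable (M) in
/-- Coverage provided to the petal `i` by matching edges meeting its hubs `u_i` and `u_{i+1}`:
every hub in the matched set covers one vertex at distance at least two from both hubs, and one
more if it is matched into the petal. -/
noncomputable def hubCover (i : ZMod n) : ℕ :=
  matchedInd M (Sum.inl i) + petalInd M i 0 +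
    (matchedInd M (Sum.inl (i + 1)) + petalInd M i (m - 2))

lemma le_six_mul_innerCount_add_hubCover (hn : 2 ≤ n) (hM : M.IsMatching)
    (hdom : ∀ v ∉ M.verts, ∃ u ∈ M.verts, (flowerGraph n m).edist u v ≤ 2) (i : ZMod n) :
    m - 4 ≤ 6 * innerCount M i + hubCover M i := by
  classical
  let inner := (Finset.Ico 1 (m - 2)).filter (petalInd M i · = 1)
  let left := Finset.Icc 2 (1 + (matchedInd M (Sum.inl i) + petalInd M i 0))
  let right := Finset.Icc (m - 2 - (matchedInd M (Sum.inl (i + 1)) + petalInd M i (m - 2))) (m - 3)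
  have hcover : Finset.Icc 2 (m - 3) ⊆
      inner.biUnion (fun q => Finset.Icc (q - 2) (q + 3)) ∪ (left ∪ right) := by
    intro k hk
    rw [Finset.mem_Icc] at hk
    simp only [Finset.mem_union, Finset.mem_biUnion, inner, left, right, Finset.mem_filter,
      Finset.mem_Ico, Finset.mem_Icc]
    rcases exists_near_edge_or_hub hn hM hdom i hk.1 (by omega) with
      ⟨q, hqm, hq, hqk, hkq⟩ | ⟨rfl, h⟩ | ⟨hkm, h⟩
    · obtain rfl | rfl | hq' : q = 0 ∨ q = m - 2 ∨ (1 ≤ q ∧ q < m - 2) := by omega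
      · have := (petalInd_le_matchedInd (M := M) i 0).1
        rw [petalVert_zero] at this
        omega
      · have := (petalInd_le_matchedInd (M := M) i (m - 2)).2
        rw [show m - 2 + 1 = m - 1 by omega, petalVert_last (by omega)] at this
        omega
      · exact Or.inl ⟨q, ⟨hq', hq⟩, by omega, by omega⟩
    · omega
    · omega
  have hinner : inner.card ≤ innerCount M i := by
    rw [Finset.card_filter, innerCount]
    gcongr
    split_ifs <;> omega
  have hbiUnion : (inner.biUnion fun q => Finset.Icc (q - 2) (q + 3)).card ≤ inner.card * 6 :=
    Finset.card_biUnion_le_card_mul _ _ _ fun q _ => by rw [Nat.card_Icc]; omega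
  have hcard := (Finset.card_le_card hcover).trans ((Finset.card_union_le _ _).trans
    (Nat.add_le_add_left (Finset.card_union_le _ _) _))
  simp only [left, right, Nat.card_Icc] at hcard
  rw [hubCover]
  omega

lemma hubCover_le_four (i : ZMod n) : hubCover M i ≤ 4 := by
  have := matchedInd_le_one (M := M) (Sum.inl i)
  have := matchedInd_le_one (M := M) (Sum.inl (i + 1))
  have := petalInd_le_one (M := M) i 0
  have := petalInd_le_one (M := M) i (m - 2)
  unfold hubCover
  omega

lemma hubCover_eq (hn : 3 ≤ n) (hm : 3 ≤ m) (hM : M.IsMatching) (i : ZMod n) :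
    hubCover M i = rimInd M (i - 1) + 2 * rimInd M i + rimInd M (i + 1) +
      2 * petalInd M i 0 + petalInd M (i + 1) 0 +
      (2 * petalInd M i (m - 2) + petalInd M (i - 1) (m - 2)) := by
  rw [hubCover, matchedInd_hub hn hm hM, matchedInd_hub hn hm hM, add_sub_cancel_right]
  ring

lemma mul_le_six_mul_sum_edgeCount_of_mod_six_eq_zero [NeZero n] (hn : 3 ≤ n) (hm : 3 ≤ m)
    (hmod : m % 6 = 0) (hM : M.IsMatching)
    (hdom : ∀ v ∉ M.verts, ∃ u ∈ M.verts, (flowerGraph n m).edist u v ≤ 2) :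
    n * (m - 3) ≤ 6 * ∑ i, edgeCount M i := by
  -- If `hubCover M i < 2`, rounding gives `m ≤ 6 * innerCount M i`; in any case it gives
  -- `m - 6 ≤ 6 * innerCount M i`.
  have hpetal : ∀ i, 2 * (m - 3) ≤ 12 * innerCount M i + 3 * hubCover M i := fun i => by
    have := le_six_mul_innerCount_add_hubCover (by omega) hM hdom i
    have := hubCover_le_four (M := M) i
    omega
  have hsum := Finset.sum_le_sum fun i (_ : i ∈ Finset.univ) => hpetal i
  simp only [hubCover_eq hn hm hM, Finset.sum_add_distrib, ← Finset.mul_sum, sum_comp_sub_right,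
    sum_comp_add_right, sum_comp_sub_right (petalInd M · (m - 2)),
    sum_comp_add_right (petalInd M · 0),
    Finset.sum_const, Finset.card_univ, ZMod.card, smul_eq_mul] at hsum
  simp only [edgeCount, Finset.sum_add_distrib]
  omega

lemma mul_le_six_mul_sum_edgeCount_of_mod_six_eq_five [NeZero n] (hn : 3 ≤ n) (hm : 3 ≤ m)
    (hmod : m % 6 = 5) (hM : M.IsMatching)
    (hdom : ∀ v ∉ M.verts, ∃ u ∈ M.verts, (flowerGraph n m).edist u v ≤ 2) :
    n * (m - 3) ≤ 6 * ∑ i, edgeCount M i := by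
  -- If `hubCover M i = 0`, rounding gives `m + 1 ≤ 6 * innerCount M i`; in any case it gives
  -- `m - 5 ≤ 6 * innerCount M i`.
  have hpetal : ∀ i, m - 3 ≤ 6 * innerCount M i + 2 * (rimInd M (i - 1) + rimInd M i +
      rimInd M (i + 1) + petalInd M i 0 + petalInd M (i + 1) 0 +
      petalInd M i (m - 2) + petalInd M (i - 1) (m - 2)) := fun i => by
    have := le_six_mul_innerCount_add_hubCover (by omega) hM hdom i
    have := hubCover_le_four (M := M) i
    have := hubCover_eq hn hm hM i
    omega
  have hsum := Finset.sum_le_sum fun i (_ : i ∈ Finset.univ) => hpetal i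
  simp only [Finset.sum_add_distrib, ← Finset.mul_sum, sum_comp_sub_right,
    sum_comp_add_right, sum_comp_sub_right (petalInd M · (m - 2)),
    sum_comp_add_right (petalInd M · 0),
    Finset.sum_const, Finset.card_univ, ZMod.card, smul_eq_mul] at hsum
  simp only [edgeCount, Finset.sum_add_distrib]
  omega

lemma two_mul_ceilDiv_six_le_ncard (hn : 3 ≤ n) (hm : 3 ≤ m) (hmod : m % 6 = 0 ∨ m % 6 = 5)
    {D : Set (FlowerVert n m)} (hD : IsKDistPairedDominating (flowerGraph n m) 2 D) :
    2 * (n * (m - 3) ⌈/⌉ 6) ≤ D.ncard := by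
  have : NeZero n := ⟨by omega⟩
  obtain ⟨hdom, M, rfl, hM⟩ := hD
  rw [ncard_verts_eq_two_mul_sum_edgeCount hn hm hM]
  refine Nat.mul_le_mul_left 2 ((ceilDiv_le_iff_le_mul (by simp)).2 ?_)
  rcases hmod with h | h
  · exact mul_le_six_mul_sum_edgeCount_of_mod_six_eq_zero hn hm h hM hdom
  · exact mul_le_six_mul_sum_edgeCount_of_mod_six_eq_five hn hm h hM hdom

end LowerBound

section UpperBound

variable {n m : ℕ}

/-- First vertices of the edges `v_{i,s-1+6t} v_{i,s+6t}`, `t < K`, where `s = s i` is the position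
in the petal `i` at which they start. -/
def innerFst {K : ℕ} (s : ZMod n → ℕ) (x : ZMod n × Fin K) : FlowerVert n m :=
  petalVert x.1 (s x.1 + 6 * x.2)

/-- Second vertices of the edges whose first vertices are given by `innerFst`. -/
def innerSnd {K : ℕ} (s : ZMod n → ℕ) (x : ZMod n × Fin K) : FlowerVert n m :=
  petalVert x.1 (s x.1 + 6 * x.2 + 1)

/-- First vertices `u_0, u_p, u_{2p}, …` of the edges, one for every `p` hubs of the rim, that
dominate the hubs and the ends of the petals. -/
def hubFst {p : ℕ} (e : Fin (n ⌈/⌉ p)) : FlowerVert n m :=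
  Sum.inl (p * e : ℕ)

/-- Second vertices of the edges whose first vertices are given by `hubFst`. The rim edge is
replaced by the first edge of the petal when the next hub is `u_0`, which is already used. -/
def hubSnd {p : ℕ} (e : Fin (n ⌈/⌉ p)) : FlowerVert n m :=
  if p * e + 1 < n then Sum.inl (p * e + 1 : ℕ) else petalVert (p * e : ℕ) 1

/-- The set of all vertices of the edges given by `innerFst` and `innerSnd`. -/
def innerVerts (m K : ℕ) (s : ZMod n → ℕ) : Set (FlowerVert n m) :=
  Set.range (Sum.elim (innerFst (K := K) s) (innerSnd (K := K) s))

/-- The set of all vertices of the edges given by `hubFst` and `hubSnd`. -/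
def hubVerts (n m p : ℕ) : Set (FlowerVert n m) :=
  Set.range (Sum.elim (hubFst (p := p)) (hubSnd (p := p)))

lemma injective_innerFst_innerSnd {K : ℕ} {s : ZMod n → ℕ} (hs : ∀ i, s i + 6 * K < m + 4) :
    Function.Injective (Sum.elim (innerFst (m := m) (K := K) s) (innerSnd (K := K) s)) := by
  rintro (⟨i, t, ht⟩ | ⟨i, t, ht⟩) (⟨i', t', ht'⟩ | ⟨i', t', ht'⟩) h <;>
    simp only [Sum.elim_inl, Sum.elim_inr, innerFst, innerSnd] at h <;>
    have := hs i <;> have := hs i' <;>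
    rw [petalVert_inj (by omega) (by omega)] at h <;>
    obtain ⟨rfl, h⟩ := h
  · obtain rfl : t = t' := by omega
    rfl
  · omega
  · omega
  · obtain rfl : t = t' := by omega
    rfl

lemma adj_innerFst_innerSnd (hm : 3 ≤ m) {K : ℕ} {s : ZMod n → ℕ}
    (hs : ∀ i, s i + 6 * K < m + 4) (x : ZMod n × Fin K) :
    (flowerGraph n m).Adj (innerFst s x) (innerSnd s x) := by
  have := hs x.1
  have := x.2.isLt
  exact adj_petalVert_succ hm x.1 (by omega)

lemma exists_innerVerts_edist_le_two {K : ℕ} {s : ZMod n → ℕ} (hs : ∀ i, s i + 6 * K < m + 4)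
    {i : ZMod n} {k : ℕ} (hkm : k < m) (hk : s i ≤ k + 2) (hk' : k + 2 < s i + 6 * K) :
    ∃ u ∈ innerVerts m K s, (flowerGraph n m).edist u (petalVert i k) ≤ 2 := by
  have hm := hs i
  let t : Fin K := ⟨(k + 2 - s i) / 6, by omega⟩
  have ht : (t : ℕ) = (k + 2 - s i) / 6 := rfl
  by_cases hmod : (k + 2 - s i) % 6 ≤ 2
  · have hdist := edist_petalVert_le (n := n) (m := m) (by omega) i (k := s i + 6 * t) (r := 2)
      (by omega) hkm (by omega) (by omega)
    exact ⟨_, ⟨Sum.inl (i, t), rfl⟩, hdist⟩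
  · have hdist := edist_petalVert_le (n := n) (m := m) (by omega) i (k := s i + 6 * t + 1) (r := 2)
      (by omega) hkm (by omega) (by omega)
    exact ⟨_, ⟨Sum.inr (i, t), rfl⟩, hdist⟩

lemma mul_lt_of_fin_ceilDiv {p : ℕ} (hp : 0 < p) (e : Fin (n ⌈/⌉ p)) : p * e < n :=
  (gc_mul_ceilDiv hp).lt_iff_lt.1 e.isLt

lemma hub_natCast_inj {x y : ℕ} (hx : x < n) (hy : y < n) :
    (Sum.inl (x : ZMod n) : FlowerVert n m) = Sum.inl (y : ZMod n) ↔ x = y := by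
  rw [Sum.inl.injEq, natCast_zmod_inj hx hy]

lemma hub_ne_petalVert_one (hm : 3 ≤ m) (i i' : ZMod n) :
    (Sum.inl i : FlowerVert n m) ≠ petalVert i' 1 := by
  simp [petalVert_succ_of_lt i' (show 0 < m - 2 by omega)]

lemma injective_hubFst {p : ℕ} (hp : 0 < p) :
    Function.Injective (hubFst (n := n) (m := m) (p := p)) := fun e e' h =>
  Fin.ext (Nat.eq_of_mul_eq_mul_left hp
    ((hub_natCast_inj (mul_lt_of_fin_ceilDiv hp e) (mul_lt_of_fin_ceilDiv hp e')).1 h))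

lemma injective_hubSnd {p : ℕ} (hp : 0 < p) (hm : 3 ≤ m) :
    Function.Injective (hubSnd (n := n) (m := m) (p := p)) := by
  refine fun e e' h => Fin.ext (Nat.eq_of_mul_eq_mul_left hp ?_)
  have hlt := mul_lt_of_fin_ceilDiv hp e
  have hlt' := mul_lt_of_fin_ceilDiv hp e'
  unfold hubSnd at h
  split_ifs at h with he he' he'
  · exact Nat.succ_inj.1 ((hub_natCast_inj he he').1 h)
  · exact absurd h (hub_ne_petalVert_one hm _ _)
  · exact absurd h.symm (hub_ne_petalVert_one hm _ _)
  · omega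

lemma hubFst_ne_hubSnd {p : ℕ} (hp : 2 ≤ p) (hm : 3 ≤ m) (e e' : Fin (n ⌈/⌉ p)) :
    (hubFst e : FlowerVert n m) ≠ hubSnd e' := by
  unfold hubFst hubSnd
  split_ifs with he'
  · rw [Ne, hub_natCast_inj (mul_lt_of_fin_ceilDiv (by omega) e) he']
    intro h
    have hdvd : p ∣ 1 := (Nat.dvd_add_right (dvd_mul_right p e')).1 (h ▸ dvd_mul_right p e)
    have := Nat.le_of_dvd one_pos hdvd
    omega
  · exact hub_ne_petalVert_one hm _ _

lemma injective_hubFst_hubSnd {p : ℕ} (hp : 2 ≤ p) (hm : 3 ≤ m) :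
    Function.Injective (Sum.elim (hubFst (n := n) (m := m) (p := p)) (hubSnd (p := p))) :=
  Sum.elim_injective.2
    ⟨injective_hubFst (by omega), injective_hubSnd (by omega) hm, hubFst_ne_hubSnd hp hm⟩

lemma adj_hubFst_hubSnd {p : ℕ} (hn : 2 ≤ n) (hm : 3 ≤ m) (e : Fin (n ⌈/⌉ p)) :
    (flowerGraph n m).Adj (hubFst e) (hubSnd e) := by
  unfold hubFst hubSnd
  split_ifs
  · rw [Nat.cast_succ]
    exact adj_rim hn _
  · exact adj_petalVert_succ hm _ (k := 0) (by omega)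

lemma hub_mem_hubVerts {p : ℕ} [NeZero n] (hp : 0 < p) {i : ZMod n} (hi : i.val % p < 2) :
    Sum.inl i ∈ hubVerts n m p := by
  have hdiv := Nat.div_add_mod i.val p
  have hlt := ZMod.val_lt i
  let e : Fin (n ⌈/⌉ p) := ⟨i.val / p, (gc_mul_ceilDiv hp).lt_iff_lt.2 (by omega)⟩
  obtain h | h : i.val % p = 0 ∨ i.val % p = 1 := by omega
  · refine ⟨Sum.inl e, ?_⟩
    rw [h, add_zero] at hdiv
    simp [e, hubFst, hdiv]
  · refine ⟨Sum.inr e, ?_⟩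
    rw [h] at hdiv
    rw [Sum.elim_inr, hubSnd, if_pos (by dsimp only [e]; omega), hdiv, ZMod.natCast_zmod_val]

lemma exists_eq_petalVert_of_mem_hubVerts {p : ℕ} {v : FlowerVert n m}
    (hv : v ∈ hubVerts n m p) : ∃ i, ∃ k ≤ 1, v = petalVert i k := by
  obtain ⟨e | e, rfl⟩ := hv
  · exact ⟨_, 0, zero_le_one, rfl⟩
  · rw [Sum.elim_inr, hubSnd]
    split_ifs
    · exact ⟨_, 0, zero_le_one, rfl⟩
    · exact ⟨_, 1, le_rfl, rfl⟩

lemma hub_mem_or_hub_succ_mem_hubVerts_three [NeZero n] (i : ZMod n) :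
    Sum.inl i ∈ hubVerts n m 3 ∨ Sum.inl (i + 1) ∈ hubVerts n m 3 := by
  by_cases hi : i.val % 3 < 2
  · exact Or.inl (hub_mem_hubVerts three_pos hi)
  · refine Or.inr (hub_mem_hubVerts three_pos ?_)
    have hlt := ZMod.val_lt i
    rw [ZMod.val_add, ZMod.val_one_eq_one_mod, Nat.add_mod_mod]
    obtain h | h : i.val + 1 < n ∨ i.val + 1 = n := by omega
    · rw [Nat.mod_eq_of_lt h]
      omega
    · simp [h]

open scoped Classical in
/-- Starting positions of the edges inside the petals, chosen in terms of the set `H` of hubs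
that dominate the ends of the petals: a petal whose first hub is in `H` is dominated
by it up to position `2`, other petals are dominated by their last hub up to position `1`. -/
noncomputable def innerStart (H : Set (FlowerVert n m)) (i : ZMod n) : ℕ :=
  if Sum.inl i ∈ H then 5 else 4

lemma four_le_innerStart (H : Set (FlowerVert n m)) (i : ZMod n) : 4 ≤ innerStart H i := by
  unfold innerStart; split_ifs <;> simp

lemma innerStart_le_five (H : Set (FlowerVert n m)) (i : ZMod n) : innerStart H i ≤ 5 := by
  unfold innerStart; split_ifs <;> simp

lemma exists_innerVerts_union_edist_le_two (hn : 2 ≤ n) {K : ℕ} {H : Set (FlowerVert n m)}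
    (hH : (m = 6 * K + 6 ∧ ∀ i, Sum.inl i ∈ H) ∨
      (m = 6 * K + 5 ∧ ∀ i, Sum.inl i ∈ H ∨ Sum.inl (i + 1) ∈ H)) (v : FlowerVert n m) :
    ∃ u ∈ innerVerts m K (innerStart H) ∪ H, (flowerGraph n m).edist u v ≤ 2 := by
  have hm : 3 ≤ m := by omega
  have hs (i : ZMod n) : innerStart H i + 6 * K < m + 4 := by
    have := innerStart_le_five H i
    omega
  obtain ⟨i, k, hk, rfl⟩ := exists_eq_petalVert hm v
  have hfirst (hi : Sum.inl i ∈ H) (hk' : k ≤ 2 ∨ m - 2 ≤ k) :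
      ∃ u ∈ innerVerts m K (innerStart H) ∪ H, (flowerGraph n m).edist u (petalVert i k) ≤ 2 :=
    ⟨_, Or.inr hi, edist_hub_petalVert_le_two hn hm i (by omega) hk'⟩
  have hlast (hi : Sum.inl (i + 1) ∈ H) (hk' : k ≤ 1 ∨ m - 3 ≤ k) :
      ∃ u ∈ innerVerts m K (innerStart H) ∪ H, (flowerGraph n m).edist u (petalVert i k) ≤ 2 :=
    ⟨_, Or.inr hi, edist_hub_succ_petalVert_le_two hn hm i (by omega) hk'⟩
  have hinner (h : innerStart H i ≤ k + 2) (h' : k + 2 < innerStart H i + 6 * K) :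
      ∃ u ∈ innerVerts m K (innerStart H) ∪ H, (flowerGraph n m).edist u (petalVert i k) ≤ 2 := by
    obtain ⟨u, hu, hdist⟩ := exists_innerVerts_edist_le_two hs (by omega) h h'
    exact ⟨u, Or.inl hu, hdist⟩
  by_cases hi : Sum.inl i ∈ H
  · rw [innerStart, if_pos hi] at hinner
    by_cases hk' : k ≤ 2 ∨ m - 2 ≤ k
    · exact hfirst hi hk'
    rcases hH with ⟨hmK, hall⟩ | ⟨hmK, -⟩
    · by_cases hk3 : m - 3 ≤ k
      · exact hlast (hall _) (Or.inr hk3)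
      · exact hinner (by omega) (by omega)
    · exact hinner (by omega) (by omega)
  · rw [innerStart, if_neg hi] at hinner
    obtain ⟨hmK, hor⟩ := hH.resolve_left fun h => hi (h.2 i)
    by_cases hk' : k ≤ 1 ∨ m - 3 ≤ k
    · exact hlast ((hor i).resolve_left hi) hk'
    · exact hinner (by omega) (by omega)

lemma disjoint_innerVerts_hubVerts {K p : ℕ} {s : ZMod n → ℕ} (hs : ∀ i, s i + 6 * K < m + 4)
    (hs2 : ∀ i, 2 ≤ s i) : Disjoint (innerVerts m K s) (hubVerts n m p) := by
  rw [Set.disjoint_left]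
  rintro _ ⟨⟨i, t⟩ | ⟨i, t⟩, rfl⟩ hv <;>
    obtain ⟨i', k, hk, h⟩ := exists_eq_petalVert_of_mem_hubVerts hv <;>
    simp only [Sum.elim_inl, Sum.elim_inr, innerFst, innerSnd] at h <;>
    have := t.isLt <;> have := hs i <;> have := hs2 i <;>
    rw [petalVert_inj (by omega) (by omega)] at h <;> omega

lemma ncard_innerVerts [NeZero n] {K : ℕ} {s : ZMod n → ℕ} (hs : ∀ i, s i + 6 * K < m + 4) :
    (innerVerts m K s).ncard = 2 * (n * K) := by
  rw [innerVerts, Set.ncard_range_of_injective (injective_innerFst_innerSnd hs)]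
  simp [two_mul]

lemma ncard_hubVerts {p : ℕ} (hp : 2 ≤ p) (hm : 3 ≤ m) :
    (hubVerts n m p).ncard = 2 * (n ⌈/⌉ p) := by
  rw [hubVerts, Set.ncard_range_of_injective (injective_hubFst_hubSnd hp hm)]
  simp [two_mul]

lemma exists_isKDistPairedDominating_of_hubVerts {K p : ℕ} (hn : 2 ≤ n) (hp : 2 ≤ p)
    (hH : (m = 6 * K + 6 ∧ ∀ i, Sum.inl i ∈ hubVerts n m p) ∨
      (m = 6 * K + 5 ∧ ∀ i, Sum.inl i ∈ hubVerts n m p ∨ Sum.inl (i + 1) ∈ hubVerts n m p)) :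
    ∃ D : Set (FlowerVert n m), IsKDistPairedDominating (flowerGraph n m) 2 D ∧
      D.ncard ≤ 2 * (n * K + n ⌈/⌉ p) := by
  have : NeZero n := ⟨by omega⟩
  have hm : 3 ≤ m := by omega
  have hs (i : ZMod n) : innerStart (hubVerts n m p) i + 6 * K < m + 4 := by
    have := innerStart_le_five (hubVerts n m p) i
    omega
  have hs2 (i : ZMod n) : 2 ≤ innerStart (hubVerts n m p) i :=
    le_trans (by simp) (four_le_innerStart _ i)
  refine ⟨innerVerts m K (innerStart (hubVerts n m p)) ∪ hubVerts n m p,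
    ⟨fun v _ => exists_innerVerts_union_edist_le_two hn hH v,
      exists_isMatching_verts_eq_union (disjoint_innerVerts_hubVerts hs hs2)
        (exists_isMatching_verts_eq_range (adj_innerFst_innerSnd hm hs)
          (injective_innerFst_innerSnd hs))
        (exists_isMatching_verts_eq_range (adj_hubFst_hubSnd hn hm)
          (injective_hubFst_hubSnd hp hm))⟩, ?_⟩
  calc _ ≤ _ + _ := Set.ncard_union_le _ _
    _ = 2 * (n * K + n ⌈/⌉ p) := by rw [ncard_innerVerts hs, ncard_hubVerts hp hm, mul_add]

lemma exists_isKDistPairedDominating_ncard_le (hn : 2 ≤ n) (hm : 3 ≤ m)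
    (hmod : m % 6 = 0 ∨ m % 6 = 5) :
    ∃ D : Set (FlowerVert n m), IsKDistPairedDominating (flowerGraph n m) 2 D ∧
      D.ncard ≤ 2 * (n * (m - 3) ⌈/⌉ 6) := by
  have : NeZero n := ⟨by omega⟩
  rcases hmod with hmod | hmod
  · obtain ⟨K, rfl⟩ : ∃ K, m = 6 * K + 6 := ⟨m / 6 - 1, by omega⟩
    have hceil : n * (6 * K + 6 - 3) ⌈/⌉ 6 = n * K + n ⌈/⌉ 2 := by
      rw [show n * (6 * K + 6 - 3) = 6 * (n * K) + 3 * n by rw [Nat.add_sub_assoc (by simp)]; ring,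
        Nat.ceilDiv_eq_add_pred_div, Nat.ceilDiv_eq_add_pred_div]
      omega
    rw [hceil]
    exact exists_isKDistPairedDominating_of_hubVerts hn le_rfl
      (Or.inl ⟨rfl, fun i => hub_mem_hubVerts two_pos (Nat.mod_lt _ two_pos)⟩)
  · obtain ⟨K, rfl⟩ : ∃ K, m = 6 * K + 5 := ⟨m / 6, by omega⟩
    have hceil : n * (6 * K + 5 - 3) ⌈/⌉ 6 = n * K + n ⌈/⌉ 3 := by
      rw [show n * (6 * K + 5 - 3) = 6 * (n * K) + 2 * n by rw [Nat.add_sub_assoc (by simp)]; ring,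
        Nat.ceilDiv_eq_add_pred_div, Nat.ceilDiv_eq_add_pred_div]
      omega
    rw [hceil]
    exact exists_isKDistPairedDominating_of_hubVerts hn (by omega)
      (Or.inr ⟨rfl, hub_mem_or_hub_succ_mem_hubVerts_three⟩)

end UpperBound

lemma kDistPairedDomNum_flowerGraph {n m : ℕ} (hn : 3 ≤ n) (hm : 3 ≤ m)
    (hmod : m % 6 = 0 ∨ m % 6 = 5) :
    kDistPairedDomNum (flowerGraph n m) 2 = 2 * (n * (m - 3) ⌈/⌉ 6) := by
  obtain ⟨D, hD, hcard⟩ :=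
    exists_isKDistPairedDominating_ncard_le (show 2 ≤ n by omega) hm hmod
  refine le_antisymm ((kDistPairedDomNum_le_ncard hD).trans hcard) ?_
  obtain ⟨D', hD', hcard'⟩ := exists_ncard_eq_kDistPairedDomNum hD
  exact hcard' ▸ two_mul_ceilDiv_six_le_ncard hn hm hmod hD'

theorem flower_twoDistPairedDomNum_mod6_05 (n m : ℕ) (hn : 3 ≤ n) (hm : 3 ≤ m)
    (h : m % 6 = 0 ∨ m % 6 = 5) :
    (kDistPairedDomNum (flowerGraph n m) 2 : ℤ) = 2 * ⌈((n : ℚ) * m - 3 * n) / 6⌉ := by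
  rw [kDistPairedDomNum_flowerGraph hn hm h, Nat.cast_mul, natCast_ceilDiv ℚ (by norm_num)]
  push_cast [hm]
  ring_nf
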